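/- Fix real α, β > −1, j ∈ ℕ, γ ∈ ℝ, M > 0, and a sequence M_n ≥ 0 with lim_{n→∞} M_n n^γ = M. Suppose γ = 2(α+2j+1). Let (b_0, …, b_{j+1}) be the unique solution of the triangular linear system Σ_{k=0}^{i} b_k·C(i,k)·(−1)^k·k!·2^k·Γ(α+i+1)/Γ(α+i+k+1) = θ_{α,β,j,i} for i = 0, 1, …, j+1, where C(i,k) is the binomial coefficient and θ_{α,β,j,i} = [M(i−j) + Γ²(α+j+1)·2^{α+β+2j+1}·(α+2j+1)·(α+j+i+1)] / [(α+j+i+1)·(M + Γ²(α+j+1)·2^{α+β+2j+1}·(α+2j+1))]. Then lim_{n→∞} Q_n(1 − z²/(2n²))/n^α = Σ_{i=0}^{j+1} b_i·2^i·(z/2)^{2i}·g_{α+2i}(z), uniformly on compact subsets of ℂ. -/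

import Mathlib

open Polynomial Filter

/-- The Jacobi polynomial `P_n^{(α,β)}` as a real polynomial. -/
noncomputable def jacobiP (α β : ℝ) (n : ℕ) : Polynomial ℝ :=
  ∑ k ∈ Finset.range (n + 1),
    Polynomial.C (Real.Gamma (n + α + 1) / (Real.Gamma ((n : ℝ) - k + 1) * Real.Gamma (α + k + 1)) *
        (Real.Gamma (n + β + 1) / (Real.Gamma ((k : ℝ) + 1) * Real.Gamma ((n : ℝ) - k + β + 1)))) *
      (Polynomial.C (2⁻¹ : ℝ) * (Polynomial.X - 1)) ^ k *
      (Polynomial.C (2⁻¹ : ℝ) * (Polynomial.X + 1)) ^ (n - k)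

/-- The squared Jacobi norm `‖P_n^{(α,β)}‖²`. -/
noncomputable def jacobiNormSq (α β : ℝ) (n : ℕ) : ℝ :=
  ∫ x in (-1 : ℝ)..1, (jacobiP α β n).eval x ^ 2 * (1 - x) ^ α * (1 + x) ^ β

/-- The kernel `K_n^{(j,k)}(x,y)`. -/
noncomputable def kernK (α β : ℝ) (j k n : ℕ) (x y : ℝ) : ℝ :=
  ∑ i ∈ Finset.range (n + 1),
    (Polynomial.derivative^[j] (jacobiP α β i)).eval x *
      (Polynomial.derivative^[k] (jacobiP α β i)).eval y / jacobiNormSq α β i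

/-- The kernel `K_n^{(j,0)}(1,·)` as a polynomial. -/
noncomputable def kernKPoly (α β : ℝ) (j n : ℕ) : Polynomial ℝ :=
  ∑ i ∈ Finset.range (n + 1),
    Polynomial.C ((Polynomial.derivative^[j] (jacobiP α β i)).eval 1 / jacobiNormSq α β i) *
      jacobiP α β i

/-- The varying Sobolev inner product `(f,g)_{S,n}` with mass `m`. -/
noncomputable def sobInner (α β : ℝ) (j : ℕ) (m : ℝ) (f g : Polynomial ℝ) : ℝ :=
  (∫ x in (-1 : ℝ)..1, f.eval x * g.eval x * (1 - x) ^ α * (1 + x) ^ β) +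
    m * (Polynomial.derivative^[j] f).eval 1 * (Polynomial.derivative^[j] g).eval 1

/-- The Jacobi–Sobolev orthogonal polynomial `Q_n`. -/
noncomputable def sobQ (α β : ℝ) (j : ℕ) (Ms : ℕ → ℝ) (n : ℕ) : Polynomial ℝ :=
  jacobiP α β n -
    Polynomial.C (Ms n * (Polynomial.derivative^[j] (jacobiP α β n)).eval 1 /
        (1 + Ms n * kernK α β j j (n - 1) 1 1)) *
      kernKPoly α β j (n - 1)

/-- The entire function `g_ν(z) = ∑ (-1)^k (z/2)^{2k}/(k! Γ(k+ν+1))`, so that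
`J_ν(x) = (x/2)^ν g_ν(x)`. -/
noncomputable def besselG (ν : ℝ) (z : ℂ) : ℂ :=
  ∑' k : ℕ, (-1) ^ k / ((Nat.factorial k : ℂ) * Complex.Gamma ((k : ℂ) + (ν : ℂ) + 1)) *
    (z / 2) ^ (2 * k)


/-- Rising factorial. -/
noncomputable def poch (m : ℕ) (x : ℝ) : ℝ := (ascPochhammer ℝ m).eval x

lemma poch_zero (x : ℝ) : poch 0 x = 1 := by simp [poch]

lemma poch_succ (m : ℕ) (x : ℝ) : poch (m + 1) x = poch m x * (x + m) := by
  simp [poch, ascPochhammer_succ_eval]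

lemma Gamma_add_nat {x : ℝ} (hx : 0 < x) (m : ℕ) :
    Real.Gamma (x + m) = poch m x * Real.Gamma x := by
  induction m with
  | zero => simp [poch_zero]
  | succ m ih =>
    have : x + ((m + 1 : ℕ) : ℝ) = (x + m) + 1 := by push_cast; ring
    rw [this, Real.Gamma_add_one (by positivity), ih, poch_succ]; ring

lemma poch_vandermonde (a b : ℝ) (m : ℕ) :
    ∑ k ∈ Finset.range (m + 1),
      (Nat.choose m k : ℝ) * (poch k (b - k + 1) * poch (m - k) (a + k + 1)) =
      poch m (a + b + 1) := by
  have h := Ring.descPochhammer_smeval_add (R := ℝ) (r := b) (s := a + m) m (Commute.all _ _)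
  have key : ∀ (k : ℕ) (x : ℝ), (descPochhammer ℤ k).smeval x = poch k (x - k + 1) := by
    intro k x
    rw [poch, ← descPochhammer_eval_eq_ascPochhammer, ← descPochhammer_map (Int.castRingHom ℝ),
      Polynomial.eval_map, ← Polynomial.aeval_eq_smeval, Polynomial.aeval_def]
    congr 1
  rw [Finset.Nat.sum_antidiagonal_eq_sum_range_succ_mk] at h
  simp only [key] at h
  have e : b + (a + (m : ℝ)) - m + 1 = a + b + 1 := by ring
  rw [e] at h
  rw [h]
  refine Finset.sum_congr rfl fun k hk => ?_
  have hk : k ≤ m := by simpa [Nat.lt_succ_iff] using hk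
  congr 3
  push_cast [Nat.cast_sub hk]
  ring

/-- Coefficient of `((x-1)/2)^m` in the Jacobi polynomial. -/
noncomputable def jc (α β : ℝ) (n m : ℕ) : ℝ :=
  Real.Gamma (n + α + 1) / (Nat.factorial n : ℝ) * (Nat.descFactorial n m : ℝ) *
    poch m (n + α + β + 1) / ((Nat.factorial m : ℝ) * Real.Gamma (α + m + 1))

lemma jc_eq_zero (α β : ℝ) {n m : ℕ} (h : n < m) : jc α β n m = 0 := by
  simp [jc, Nat.descFactorial_eq_zero_iff_lt.2 h]

/-- Defining coefficients. -/
noncomputable def ja (α β : ℝ) (n k : ℕ) : ℝ :=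
  (Real.Gamma (n + α + 1) / (Real.Gamma ((n : ℝ) - k + 1) * Real.Gamma (α + k + 1)) *
        (Real.Gamma (n + β + 1) / (Real.Gamma ((k : ℝ) + 1) * Real.Gamma ((n : ℝ) - k + β + 1))))

lemma ja_sum (α β : ℝ) (hα : -1 < α) (hβ : -1 < β) {n m : ℕ} (hm : m ≤ n) :
    ∑ k ∈ Finset.range (m + 1), ja α β n k * (Nat.choose (n - k) (m - k) : ℝ) = jc α β n m := by
  have h := poch_vandermonde α (n + β) m
  have e : α + (n + β) + 1 = n + α + β + 1 := by ring
  rw [e] at h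
  rw [jc, ← h, Finset.mul_sum, Finset.sum_div]
  refine Finset.sum_congr rfl fun k hk => ?_
  have hk : k ≤ m := by simpa [Nat.lt_succ_iff] using hk
  have hkn : k ≤ n := hk.trans hm
  have g1 : Real.Gamma ((n : ℝ) - k + 1) = ((n - k).factorial : ℝ) := by
    rw [← Nat.cast_sub hkn, Real.Gamma_nat_eq_factorial]
  have hpos : (0 : ℝ) < (n : ℝ) - k + β + 1 := by
    have : (k : ℝ) ≤ n := by exact_mod_cast hkn
    linarith
  have g2 : Real.Gamma (n + β + 1) = poch k (n + β - k + 1) * Real.Gamma ((n : ℝ) - k + β + 1) := by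
    have := Gamma_add_nat hpos k
    rw [show (n : ℝ) + β - k + 1 = n - k + β + 1 by ring, ← this]; congr 1; ring
  have hpos2 : (0 : ℝ) < α + k + 1 := by
    have : (0 : ℝ) ≤ k := by positivity
    linarith
  have g3 : Real.Gamma (α + m + 1) = poch (m - k) (α + k + 1) * Real.Gamma (α + k + 1) := by
    have := Gamma_add_nat hpos2 (m - k)
    rw [← this]; congr 1; push_cast [Nat.cast_sub hk]; ring
  have c1 : (Nat.choose (n - k) (m - k) : ℝ) = ((n - k).factorial : ℝ) / ((m-k).factorial * (n - m).factorial) := by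
    rw [Nat.cast_choose ℝ (by omega)]
    congr 3; congr 1; omega
  have c2 : (Nat.choose m k : ℝ) = (m.factorial : ℝ) / (k.factorial * (m - k).factorial) :=
    Nat.cast_choose ℝ hk
  have c3 : (Nat.descFactorial n m : ℝ) = (n.factorial : ℝ) / (n - m).factorial := by
    rw [eq_div_iff (by positivity), mul_comm]; exact_mod_cast Nat.factorial_mul_descFactorial hm
  have p0 : Real.Gamma ((n : ℝ) - k + β + 1) ≠ 0 := (Real.Gamma_pos_of_pos hpos).ne'
  have p1 : Real.Gamma (α + k + 1) ≠ 0 := (Real.Gamma_pos_of_pos hpos2).ne'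
  have p2 : poch (m - k) (α + k + 1) ≠ 0 := by
    intro h0
    rw [h0, zero_mul] at g3
    have : (0 : ℝ) < α + m + 1 := by
      have : (0 : ℝ) ≤ m := by positivity
      linarith
    exact (Real.Gamma_pos_of_pos this).ne' g3
  rw [ja, g1, g2, g3, c1, c2, c3, Real.Gamma_nat_eq_factorial]
  have f1 : ((n-k).factorial : ℝ) ≠ 0 := by positivity
  have f2 : ((m-k).factorial : ℝ) ≠ 0 := by positivity
  have f3 : ((n-m).factorial : ℝ) ≠ 0 := by positivity
  have f4 : (n.factorial : ℝ) ≠ 0 := by positivity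
  have f5 : (m.factorial : ℝ) ≠ 0 := by positivity
  have f6 : (k.factorial : ℝ) ≠ 0 := by positivity
  field_simp

lemma jacobiP_eq (α β : ℝ) (hα : -1 < α) (hβ : -1 < β) (n : ℕ) :
    jacobiP α β n = ∑ m ∈ Finset.range (n + 1),
      Polynomial.C (jc α β n m) * (Polynomial.C (2⁻¹ : ℝ) * (Polynomial.X - 1)) ^ m := by
  set T : Polynomial ℝ := Polynomial.C (2⁻¹ : ℝ) * (Polynomial.X - 1) with hT
  have h1 : Polynomial.C (2⁻¹ : ℝ) * (Polynomial.X + 1) = T + 1 := by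
    have : (1 : Polynomial ℝ) = Polynomial.C (2⁻¹ : ℝ) * 2 := by
      rw [show (2 : Polynomial ℝ) = Polynomial.C 2 from rfl, ← Polynomial.C_mul]; norm_num
    rw [hT]; nth_rw 3 [this]; ring
  have h2 : jacobiP α β n = ∑ k ∈ Finset.range (n + 1), Polynomial.C (ja α β n k) * T ^ k * (T + 1) ^ (n - k) := by
    rw [← h1]; rfl
  rw [h2]
  have h3 : ∀ k ∈ Finset.range (n + 1), Polynomial.C (ja α β n k) * T ^ k * (T + 1) ^ (n - k) =
      ∑ l ∈ Finset.range (n + 1 - k), (Polynomial.C (ja α β n k * (Nat.choose (n - k) l : ℝ)) * T ^ (k + l)) := by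
    intro k hk
    have hk : k ≤ n := by simpa [Nat.lt_succ_iff] using hk
    rw [add_pow, Finset.mul_sum, show n - k + 1 = n + 1 - k by omega]
    refine Finset.sum_congr rfl fun l _ => ?_
    rw [Polynomial.C_mul, pow_add]
    simp
    ring
  rw [Finset.sum_congr rfl h3, ← Finset.sum_range_diag_flip (n + 1) (fun k l =>
    (Polynomial.C (ja α β n k * (Nat.choose (n - k) l : ℝ)) * T ^ (k + l)))]
  refine Finset.sum_congr rfl fun m hm => ?_
  have hm : m ≤ n := by simpa [Nat.lt_succ_iff] using hm
  rw [← ja_sum α β hα hβ hm, map_sum, Finset.sum_mul]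
  refine Finset.sum_congr rfl fun k hk => ?_
  have hk : k ≤ m := by simpa [Nat.lt_succ_iff] using hk
  rw [show k + (m - k) = m by omega]

lemma jacobiP_deriv (α β : ℝ) (hα : -1 < α) (hβ : -1 < β) (n j : ℕ) :
    (Polynomial.derivative^[j] (jacobiP α β n)).eval 1 = (Nat.factorial j : ℝ) / 2 ^ j * jc α β n j := by
  have h : jacobiP α β n = (∑ m ∈ Finset.range (n + 1),
      Polynomial.C (jc α β n m * (2⁻¹) ^ m) * Polynomial.X ^ m).comp (Polynomial.X - Polynomial.C 1) := by
    rw [jacobiP_eq α β hα hβ, Polynomial.sum_comp]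
    refine Finset.sum_congr rfl fun m _ => ?_
    simp only [mul_pow, Polynomial.C_mul, Polynomial.C_pow, Polynomial.mul_comp, Polynomial.pow_comp, Polynomial.C_comp, Polynomial.X_comp, Polynomial.C_1]
    ring
  have h2 : (Polynomial.derivative^[j] (jacobiP α β n)).eval 1 = 
     (Nat.factorial j : ℝ) * (Polynomial.taylor 1 (jacobiP α β n)).coeff j := by
    rw [Polynomial.taylor_coeff, ← Polynomial.factorial_smul_hasseDeriv]
    simp
  rw [h2, h, Polynomial.taylor_apply, Polynomial.comp_assoc]
  have h4 : (Polynomial.X - Polynomial.C (1 : ℝ)).comp (Polynomial.X + Polynomial.C 1) = Polynomial.X := by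
    simp
  rw [h4, Polynomial.comp_X, Polynomial.finsetSum_coeff]
  simp only [Polynomial.coeff_C_mul_X_pow, Finset.sum_ite_eq, Finset.mem_range]
  by_cases hj : j < n + 1
  · rw [if_pos hj, inv_pow]; field_simp
  · rw [if_neg hj, jc_eq_zero α β (by omega)]; ring

lemma beta_integrable {a b : ℝ} (ha : -1 < a) (hb : -1 < b) :
    IntervalIntegrable (fun y : ℝ => y ^ a * (1 - y) ^ b) MeasureTheory.volume 0 1 ∧
    ∫ y in (0:ℝ)..1, y ^ a * (1 - y) ^ b =
      Real.Gamma (a + 1) * Real.Gamma (b + 1) / Real.Gamma (a + b + 2) := by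
  have hu : 0 < ((a + 1 : ℝ) : ℂ).re := by simp; linarith
  have hv : 0 < ((b + 1 : ℝ) : ℂ).re := by simp; linarith
  have h1 := Complex.betaIntegral_convergent hu hv
  have h2 := Complex.betaIntegral_eq_Gamma_mul_div _ _ hu hv
  have key : ∀ y ∈ Set.uIoc (0:ℝ) 1, (y : ℂ) ^ (((a + 1 : ℝ) : ℂ) - 1) * (1 - (y : ℂ)) ^ (((b + 1 : ℝ) : ℂ) - 1)
      = ((y ^ a * (1 - y) ^ b : ℝ) : ℂ) := by
    intro y hy
    rw [Set.uIoc_of_le zero_le_one] at hy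
    have e1 : ((a + 1 : ℝ) : ℂ) - 1 = (a : ℂ) := by push_cast; ring
    have e2 : ((b + 1 : ℝ) : ℂ) - 1 = (b : ℂ) := by push_cast; ring
    rw [e1, e2, Complex.ofReal_mul, Complex.ofReal_cpow hy.1.le, Complex.ofReal_cpow (by linarith [hy.2])]
    push_cast; rfl
  have h3 : IntervalIntegrable (fun y : ℝ => ((y ^ a * (1 - y) ^ b : ℝ) : ℂ)) MeasureTheory.volume 0 1 :=
    h1.congr key
  constructor
  · have h4 := h3.def'
    rw [intervalIntegrable_iff]
    exact MeasureTheory.Integrable.re h4 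
  · have h5 : Complex.betaIntegral ((a + 1 : ℝ) : ℂ) ((b + 1 : ℝ) : ℂ) =
      ((∫ y in (0:ℝ)..1, y ^ a * (1 - y) ^ b : ℝ) : ℂ) := by
      rw [← intervalIntegral.integral_ofReal, Complex.betaIntegral]
      apply intervalIntegral.integral_congr_ae
      exact Filter.Eventually.of_forall key
    rw [h5, ← Complex.ofReal_add, Complex.Gamma_ofReal, Complex.Gamma_ofReal, Complex.Gamma_ofReal] at h2
    rw [show a + b + 2 = a + 1 + (b + 1) by ring]
    exact_mod_cast h2

lemma poch_eval_natDegree (m : ℕ) (c : ℝ) :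
    ∃ P : Polynomial ℝ, P.natDegree = m ∧ P.leadingCoeff = 1 ∧ ∀ x, P.eval x = poch m (x + c) := by
  refine ⟨(ascPochhammer ℝ m).comp (Polynomial.X + Polynomial.C c), ?_, ?_, ?_⟩
  · rw [Polynomial.natDegree_comp]; simp [ascPochhammer_natDegree]
  · rw [Polynomial.leadingCoeff_comp (by simp)]
    simp [(monic_ascPochhammer ℝ m).leadingCoeff]
  · intro x; simp [poch]

lemma alt_sum (n m : ℕ) (hm : m ≤ n) (c : ℝ) :
    ∑ k ∈ Finset.range (n + 1), (-1 : ℝ) ^ k * (Nat.choose n k : ℝ) * poch m (k + c) =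
      if m = n then (-1) ^ n * (Nat.factorial n : ℝ) else 0 := by
  obtain ⟨P, h1, h2, h3⟩ := poch_eval_natDegree m c
  have key : ∑ k ∈ Finset.range (n + 1), (-1 : ℝ) ^ k * (Nat.choose n k : ℝ) * poch m (k + c) =
      (-1) ^ n * (fwdDiff (1:ℝ))^[n] P.eval 0 := by
    rw [fwdDiff_iter_eq_sum_shift, Finset.mul_sum]
    refine Finset.sum_congr rfl fun k hk => ?_
    have hk : k ≤ n := by simpa [Nat.lt_succ_iff] using hk
    rw [← h3]
    simp only [zsmul_eq_mul, nsmul_eq_mul, zero_add, mul_one]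
    push_cast
    have : (-1 : ℝ) ^ n * (-1) ^ (n - k) = (-1) ^ k := by
      obtain ⟨d, rfl⟩ := Nat.exists_eq_add_of_le hk
      rw [pow_add, Nat.add_sub_cancel_left, mul_assoc, ← mul_pow]; simp
    rw [← this]; ring
  rw [key]
  split_ifs with h
  · subst h
    have := Polynomial.fwdDiff_iter_degree_eq_factorial P
    rw [h1, h2] at this
    rw [this]; simp
  · have := Polynomial.fwdDiff_iter_eq_zero_of_degree_lt (P := P) (n := n) (by omega)
    rw [this]; simp

lemma moment (α β : ℝ) (hα : -1 < α) (hβ : -1 < β) (n m : ℕ) (hm : m ≤ n) :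
    ∑ k ∈ Finset.range (n + 1), ja α β n k * (-1) ^ k *
      (Real.Gamma (α + m + k + 1) * Real.Gamma (β + (n - k) + 1) / Real.Gamma (α + β + m + n + 2)) =
    if m = n then (-1) ^ n * Real.Gamma (n + α + 1) * Real.Gamma (n + β + 1) /
      Real.Gamma (α + β + n + n + 2) else 0 := by
  have h := alt_sum n m hm (α + 1)
  have : ∑ k ∈ Finset.range (n + 1), ja α β n k * (-1) ^ k *
      (Real.Gamma (α + m + k + 1) * Real.Gamma (β + (n - k) + 1) / Real.Gamma (α + β + m + n + 2)) =
      (Real.Gamma (n + α + 1) * Real.Gamma (n + β + 1) / (Nat.factorial n *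
      Real.Gamma (α + β + m + n + 2))) * ∑ k ∈ Finset.range (n + 1), (-1 : ℝ) ^ k * (Nat.choose n k : ℝ) * poch m (k + (α + 1)) := by
    rw [Finset.mul_sum]
    refine Finset.sum_congr rfl fun k hk => ?_
    have hkn : k ≤ n := by simpa [Nat.lt_succ_iff] using hk
    have hkn' : (k : ℝ) ≤ n := by exact_mod_cast hkn
    have hk0 : (0 : ℝ) ≤ k := by positivity
    have hm0 : (0 : ℝ) ≤ m := by positivity
    have g1 : Real.Gamma ((n : ℝ) - k + 1) = ((n - k).factorial : ℝ) := by
      rw [← Nat.cast_sub hkn, Real.Gamma_nat_eq_factorial]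
    have hp : 0 < (k : ℝ) + (α + 1) := by linarith
    have g2 := Gamma_add_nat hp m
    have c2 : (Nat.choose n k : ℝ) = (n.factorial : ℝ) / (k.factorial * (n - k).factorial) :=
      Nat.cast_choose ℝ hkn
    rw [ja, g1, c2, show α + m + k + 1 = (k : ℝ) + (α + 1) + m by ring, g2, 
      show α + k + 1 = (k : ℝ) + (α + 1) by ring, show (n : ℝ) - k + β + 1 = β + (n - k) + 1 by ring,
      Real.Gamma_nat_eq_factorial]
    have p1 : Real.Gamma ((k : ℝ) + (α + 1)) ≠ 0 := (Real.Gamma_pos_of_pos hp).ne'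
    have p2 : Real.Gamma (β + (n - k) + 1) ≠ 0 := (Real.Gamma_pos_of_pos (by linarith)).ne'
    have p3 : Real.Gamma (α + β + m + n + 2) ≠ 0 := (Real.Gamma_pos_of_pos (by linarith)).ne'
    have f1 : ((n-k).factorial : ℝ) ≠ 0 := by positivity
    have f4 : (n.factorial : ℝ) ≠ 0 := by positivity
    have f6 : (k.factorial : ℝ) ≠ 0 := by positivity
    field_simp
  rw [this, h]
  split_ifs with hh
  · subst hh
    have f4 : (m.factorial : ℝ) ≠ 0 := by positivity
    field_simp
  · simp

lemma jacobi_eval1 (α β : ℝ) (n : ℕ) (y : ℝ) : (jacobiP α β n).eval (1 - 2 * y) =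
    ∑ k ∈ Finset.range (n + 1), ja α β n k * (-1) ^ k * (y ^ k * (1 - y) ^ (n - k)) := by
  rw [jacobiP, Polynomial.eval_finsetSum]
  refine Finset.sum_congr rfl fun k _ => ?_
  simp only [Polynomial.eval_mul, Polynomial.eval_pow, Polynomial.eval_C, Polynomial.eval_sub,
    Polynomial.eval_add, Polynomial.eval_X, Polynomial.eval_one]
  rw [show (2⁻¹ : ℝ) * (1 - 2 * y - 1) = (-1) * y by ring, show (2⁻¹ : ℝ) * (1 - 2 * y + 1) = 1 - y by ring,
    mul_pow, ja]
  ring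

lemma jacobi_eval2 (α β : ℝ) (hα : -1 < α) (hβ : -1 < β) (n : ℕ) (y : ℝ) : (jacobiP α β n).eval (1 - 2 * y) =
    ∑ m ∈ Finset.range (n + 1), jc α β n m * (-1) ^ m * y ^ m := by
  rw [jacobiP_eq α β hα hβ, Polynomial.eval_finsetSum]
  refine Finset.sum_congr rfl fun k _ => ?_
  simp only [Polynomial.eval_mul, Polynomial.eval_pow, Polynomial.eval_C, Polynomial.eval_sub,
    Polynomial.eval_X, Polynomial.eval_one]
  rw [show (2⁻¹ : ℝ) * (1 - 2 * y - 1) = (-1) * y by ring, mul_pow]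
  ring

lemma normSq_eq (α β : ℝ) (hα : -1 < α) (hβ : -1 < β) (n : ℕ) :
    jacobiNormSq α β n = 2 ^ (α + β + 1) * (jc α β n n * Real.Gamma (n + α + 1) * Real.Gamma (n + β + 1) /
      Real.Gamma (α + β + n + n + 2)) := by
  have e1 : jacobiNormSq α β n = 2 * ∫ y in (0:ℝ)..1, (jacobiP α β n).eval (1 - 2 * y) ^ 2 *
     (1 - (1 - 2 * y)) ^ α * (1 + (1 - 2 * y)) ^ β := by
    have := intervalIntegral.mul_integral_comp_sub_mul (a := 0) (b := 1) (f := fun x : ℝ => (jacobiP α β n).eval x ^ 2 * (1 - x) ^ α * (1 + x) ^ β) (c := 2) (d := 1)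
    rw [this, jacobiNormSq]
    norm_num
  have e2 : ∫ y in (0:ℝ)..1, (jacobiP α β n).eval (1 - 2 * y) ^ 2 *
     (1 - (1 - 2 * y)) ^ α * (1 + (1 - 2 * y)) ^ β = 
     ∫ y in (0:ℝ)..1, 2 ^ (α + β) * ∑ m ∈ Finset.range (n + 1), jc α β n m * (-1) ^ m *
       ∑ k ∈ Finset.range (n + 1), ja α β n k * (-1) ^ k * (y ^ (α + m + k) * (1 - y) ^ (β + ((n - k : ℕ) : ℝ))) := by
    apply intervalIntegral.integral_congr_uIoo
    intro y hy
    simp only [Set.uIoo_of_le (zero_le_one (α := ℝ)), Set.mem_Ioo] at hy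
    have hy1 : 0 < 1 - y := by linarith [hy.2]
    simp only
    rw [show (1 : ℝ) - (1 - 2 * y) = 2 * y by ring, show (1 : ℝ) + (1 - 2 * y) = 2 * (1 - y) by ring,
      Real.mul_rpow zero_le_two hy.1.le, Real.mul_rpow zero_le_two hy1.le, Real.rpow_add two_pos, pow_two]
    nth_rw 1 [jacobi_eval2 α β hα hβ]
    rw [jacobi_eval1]
    simp only [Finset.sum_mul, Finset.mul_sum]
    rw [Finset.sum_comm]
    refine Finset.sum_congr rfl fun k _ => Finset.sum_congr rfl fun l _ => ?_
    rw [Real.rpow_add hy.1, Real.rpow_add hy.1, Real.rpow_add hy1, Real.rpow_natCast, Real.rpow_natCast, Real.rpow_natCast]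
    ring
  have I : ∀ m k : ℕ, -1 < α + m + k ∧ -1 < β + ((n - k : ℕ) : ℝ) := by
    intro m k
    have : (0 : ℝ) ≤ m := by positivity
    have : (0 : ℝ) ≤ k := by positivity
    have : (0 : ℝ) ≤ ((n - k : ℕ) : ℝ) := by positivity
    constructor <;> linarith
  rw [e1, e2, intervalIntegral.integral_const_mul, intervalIntegral.integral_finsetSum]
  · have e3 : ∀ m ∈ Finset.range (n + 1), ∫ y in (0:ℝ)..1, jc α β n m * (-1) ^ m *
       ∑ k ∈ Finset.range (n + 1), ja α β n k * (-1) ^ k * (y ^ (α + m + k) * (1 - y) ^ (β + ((n - k : ℕ) : ℝ))) =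
       jc α β n m * (-1) ^ m * if m = n then (-1) ^ n * Real.Gamma (n + α + 1) * Real.Gamma (n + β + 1) /
      Real.Gamma (α + β + n + n + 2) else 0 := by
      intro m hm
      have hm : m ≤ n := by simpa [Nat.lt_succ_iff] using hm
      rw [intervalIntegral.integral_const_mul, intervalIntegral.integral_finsetSum, ← moment α β hα hβ n m hm]
      · congr 1
        refine Finset.sum_congr rfl fun k hk => ?_
        have hk : k ≤ n := by simpa [Nat.lt_succ_iff] using hk
        rw [intervalIntegral.integral_const_mul, (beta_integrable (I m k).1 (I m k).2).2]
        push_cast [Nat.cast_sub hk]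
        congr 3
        ring
      · intro k _
        exact (beta_integrable (I m k).1 (I m k).2).1.const_mul _
    rw [Finset.sum_congr rfl e3, Finset.sum_eq_single n]
    · rw [if_pos rfl, Real.rpow_add two_pos (α + β), Real.rpow_one]
      have : (-1 : ℝ) ^ n * (-1) ^ n = 1 := by rw [← mul_pow]; simp
      linear_combination (2 * 2 ^ (α + β) * jc α β n n * Real.Gamma (n + α + 1) * Real.Gamma (n + β + 1) /
      Real.Gamma (α + β + n + n + 2)) * this
    · intro m _ hm; simp [hm]
    · simp
  · intro m _
    apply IntervalIntegrable.const_mul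
    have := IntervalIntegrable.sum (μ := MeasureTheory.volume) (a := 0) (b := 1) (Finset.range (n + 1))
      (f := fun k y => ja α β n k * (-1) ^ k * (y ^ (α + m + k) * (1 - y) ^ (β + ((n - k : ℕ) : ℝ))))
      (fun k _ => (beta_integrable (I m k).1 (I m k).2).1.const_mul _)
    refine this.congr fun y _ => ?_
    simp only [Finset.sum_apply]

open Topology Asymptotics

lemma tendsto_add_div (c : ℝ) : Tendsto (fun n : ℕ => ((n : ℝ) + c) / n) atTop (𝓝 1) := by
  have h : Tendsto (fun n : ℕ => 1 + c / (n : ℝ)) atTop (𝓝 (1 + 0)) :=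
    tendsto_const_nhds.add (tendsto_const_div_atTop_nhds_zero_nat c)
  rw [add_zero] at h
  refine h.congr' ?_
  filter_upwards [eventually_ge_atTop 1] with n hn
  have : (n : ℝ) ≠ 0 := by positivity
  field_simp

lemma gammaRatio {a : ℝ} (ha : -2 < a) :
    Tendsto (fun n : ℕ => Real.Gamma (n + a + 1) / (Nat.factorial n : ℝ) / (n : ℝ) ^ a) atTop (𝓝 1) := by
  have hs : 0 < a + 2 := by linarith
  have g0 : Real.Gamma (a + 2) ≠ 0 := (Real.Gamma_pos_of_pos hs).ne'
  have h := Real.GammaSeq_tendsto_Gamma (a + 2)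
  have h2 : Tendsto (fun n : ℕ => (Real.GammaSeq (a + 2) n / Real.Gamma (a + 2) *
    (((n : ℝ) + (a + 2)) / n) * (((n : ℝ) + (a + 1)) / n))⁻¹) atTop (𝓝 ((Real.Gamma (a + 2) / Real.Gamma (a + 2) * 1 * 1)⁻¹)) := by
    refine Tendsto.inv₀ (((h.div_const _).mul (tendsto_add_div _)).mul (tendsto_add_div _)) ?_
    simp [g0]
  rw [div_self g0] at h2
  simp only [mul_one, inv_one] at h2
  refine h2.congr' ?_
  filter_upwards [eventually_ge_atTop 1] with n hn
  have hn1 : (1 : ℝ) ≤ n := by exact_mod_cast hn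
  have hn0 : (0 : ℝ) < n := by linarith
  have hprod : ∏ j ∈ Finset.range (n + 1), (a + 2 + (j : ℝ)) = poch (n + 1) (a + 2) := by
    generalize n + 1 = N
    induction N with
    | zero => simp [poch_zero]
    | succ N ih => rw [Finset.prod_range_succ, ih, poch_succ]
  have hg := Gamma_add_nat hs (n + 1)
  have hp : 0 < (n : ℝ) + a + 1 := by linarith
  have e1 : Real.Gamma (a + 2 + ((n + 1 : ℕ) : ℝ)) = (n + a + 2) * ((n + a + 1) * Real.Gamma (n + a + 1)) := by
    rw [show a + 2 + ((n + 1 : ℕ) : ℝ) = (n + a + 1 + 1) + 1 by push_cast; ring, Real.Gamma_add_one (by linarith),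
      Real.Gamma_add_one (by linarith)]; ring
  have hp3 : poch (n + 1) (a + 2) = (n + a + 2) * ((n + a + 1) * Real.Gamma (n + a + 1)) / Real.Gamma (a + 2) := by
    rw [eq_div_iff g0, ← hg, e1]
  have hgp : Real.Gamma (n + a + 1) ≠ 0 := (Real.Gamma_pos_of_pos hp).ne'
  rw [Real.GammaSeq, hprod, hp3, Real.rpow_add hn0, show (2 : ℝ) = ((2 : ℕ) : ℝ) by norm_num, Real.rpow_natCast]
  push_cast
  have hna : (n : ℝ) ^ a ≠ 0 := (Real.rpow_pos_of_pos hn0 a).ne'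
  have : (n : ℝ) + a + 2 ≠ 0 := by linarith
  have : (n : ℝ) + a + 1 ≠ 0 := by linarith
  have : (n : ℝ) + (a + 2) ≠ 0 := by linarith
  have : (n : ℝ) + (a + 1) ≠ 0 := by linarith
  field_simp
  ring

lemma poch_tendsto (c : ℝ) (m : ℕ) :
    Tendsto (fun n : ℕ => poch m (n + c) / (n : ℝ) ^ m) atTop (𝓝 1) := by
  induction m with
  | zero => simp [poch_zero]
  | succ m ih =>
    have := ih.mul (tendsto_add_div (c + m))
    rw [one_mul] at this
    refine this.congr fun n => ?_
    rw [poch_succ, pow_succ, div_mul_div_comm, add_assoc]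

lemma descFactorial_eq_poch (n m : ℕ) : (Nat.descFactorial n m : ℝ) = poch m (n + (1 - m)) := by
  rw [← descPochhammer_eval_eq_descFactorial ℝ, descPochhammer_eval_eq_ascPochhammer, poch]
  congr 1; ring

lemma rpow_split (α : ℝ) (m : ℕ) {n : ℕ} (hn : 1 ≤ n) :
    (n : ℝ) ^ (α + 2 * m) = (n : ℝ) ^ α * (n : ℝ) ^ m * (n : ℝ) ^ m := by
  have hn0 : (0 : ℝ) < n := by exact_mod_cast hn
  rw [Real.rpow_add hn0, mul_assoc, ← pow_add, ← Real.rpow_natCast (n : ℝ) (m + m)]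
  congr 2; push_cast; ring

/-- limit coefficients -/
noncomputable def jU (α : ℝ) (m : ℕ) : ℝ := 1 / ((Nat.factorial m : ℝ) * Real.Gamma (α + m + 1))

lemma jc_tendsto (α β : ℝ) (hα : -1 < α) (m : ℕ) :
    Tendsto (fun n : ℕ => jc α β n m / (n : ℝ) ^ (α + 2 * m)) atTop (𝓝 (jU α m)) := by
  have h := (((gammaRatio (a := α) (by linarith)).mul (poch_tendsto (1 - m) m)).mul
    (poch_tendsto (α + β + 1) m)).mul_const (jU α m)
  simp only [mul_one, one_mul] at h
  refine h.congr' ?_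
  filter_upwards [eventually_ge_atTop 1] with n hn
  rw [rpow_split α m hn, jc, jU, descFactorial_eq_poch, show (n : ℝ) + (α + β + 1) = n + α + β + 1 by ring]
  ring

lemma normSq_tendsto (α β : ℝ) (hα : -1 < α) (hβ : -1 < β) :
    Tendsto (fun n : ℕ => jacobiNormSq α β n * n) atTop (𝓝 (2 ^ (α + β))) := by
  have h := (((gammaRatio (a := α) (by linarith)).mul (gammaRatio (a := β) (by linarith))).div
    (gammaRatio (a := α + β) (by linarith)) one_ne_zero).div ((tendsto_add_div ((α + β + 1)/2))) one_ne_zero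
  have h := h.const_mul (2 ^ (α + β))
  simp only [mul_one, div_one, Pi.div_apply] at h
  refine h.congr' ?_
  filter_upwards [eventually_ge_atTop 1] with n hn
  have hn1 : (1 : ℝ) ≤ n := by exact_mod_cast hn
  have hn0 : (0 : ℝ) < n := by linarith
  have hp : 0 < (n : ℝ) + α + β + 1 := by linarith
  have hg := Gamma_add_nat hp n
  have e1 : Real.Gamma (α + β + n + n + 2) = (2 * n + α + β + 1) * (poch n (n + α + β + 1) * Real.Gamma (n + α + β + 1)) := by
    rw [← hg, show α + β + n + n + 2 = (n + α + β + 1 + n) + 1 by ring, Real.Gamma_add_one (by linarith)]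
    ring
  have pn : poch n (n + α + β + 1) ≠ 0 := by
    intro h0
    rw [h0, zero_mul] at hg
    exact (Real.Gamma_pos_of_pos (show 0 < (n : ℝ) + α + β + 1 + n by linarith)).ne' hg
  have g1 : Real.Gamma (n + α + β + 1) ≠ 0 := (Real.Gamma_pos_of_pos hp).ne'
  have g2 : Real.Gamma (n + α + 1) ≠ 0 := (Real.Gamma_pos_of_pos (by linarith)).ne'
  have g3 : Real.Gamma (n + β + 1) ≠ 0 := (Real.Gamma_pos_of_pos (by linarith)).ne'
  have f0 : (n.factorial : ℝ) ≠ 0 := by positivity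
  have r1 : (n : ℝ) ^ α ≠ 0 := (Real.rpow_pos_of_pos hn0 _).ne'
  have r2 : (n : ℝ) ^ β ≠ 0 := (Real.rpow_pos_of_pos hn0 _).ne'
  have d1 : 2 * (n : ℝ) + α + β + 1 ≠ 0 := by linarith
  have d2 : (n : ℝ) + (α + β + 1) / 2 ≠ 0 := by linarith
  rw [normSq_eq α β hα hβ, e1, jc, Nat.descFactorial_self, Real.rpow_add two_pos (α + β), Real.rpow_one,
    show (n : ℝ) + (α + β) + 1 = n + α + β + 1 by ring, Real.rpow_add hn0, show α + n + 1 = (n : ℝ) + α + 1 by ring,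
    show 2 * (n : ℝ) + α + β + 1 = 2 * (n + (α + β + 1) / 2) by ring]
  field_simp

lemma sum_tendsto {s L : ℝ} (hs : -1 < s) {a : ℕ → ℝ}
    (ha : Tendsto (fun n : ℕ => a n / (n : ℝ) ^ s) atTop (𝓝 L)) :
    Tendsto (fun n : ℕ => (∑ i ∈ Finset.range n, a i) / (n : ℝ) ^ (s + 1)) atTop (𝓝 (L / (s + 1))) := by
  have hs1 : 0 < s + 1 := by linarith
  set g : ℕ → ℝ := fun n => ((n + 1 : ℕ) : ℝ) ^ (s + 1) - (n : ℝ) ^ (s + 1) with hg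
  have gsum : ∀ n, ∑ i ∈ Finset.range n, g i = (n : ℝ) ^ (s + 1) := by
    intro n
    rw [hg, Finset.sum_range_sub (fun n : ℕ => (n : ℝ) ^ (s + 1))]
    simp [Real.zero_rpow hs1.ne']
  have gnn : 0 ≤ g := by
    intro n
    simp only [hg, Pi.zero_apply, sub_nonneg]
    exact Real.rpow_le_rpow (by positivity) (by push_cast; linarith) hs1.le
  have gtop : Tendsto (fun n => ∑ i ∈ Finset.range n, g i) atTop atTop := by
    simp only [gsum]
    exact (tendsto_rpow_atTop hs1).comp tendsto_natCast_atTop_atTop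
  have gasym : Tendsto (fun n : ℕ => g n / (n : ℝ) ^ s) atTop (𝓝 (s + 1)) := by
    have hd : HasDerivAt (fun x : ℝ => x ^ (s + 1)) (s + 1) 1 := by
      simpa using Real.hasDerivAt_rpow_const (x := 1) (p := s + 1) (Or.inl one_ne_zero)
    have h1 := hd.tendsto_slope_zero
    have h2 : Tendsto (fun n : ℕ => ((n : ℝ))⁻¹) atTop (𝓝[≠] 0) := by
      refine tendsto_nhdsWithin_iff.2 ⟨tendsto_inv_atTop_nhds_zero_nat, ?_⟩
      filter_upwards [eventually_ge_atTop 1] with n hn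
      have : (n : ℝ) ≠ 0 := by positivity
      simpa using this
    refine (h1.comp h2).congr' ?_
    filter_upwards [eventually_ge_atTop 1] with n hn
    have hn0 : (0 : ℝ) < n := by exact_mod_cast hn
    have hr : (n : ℝ) ^ s ≠ 0 := (Real.rpow_pos_of_pos hn0 _).ne'
    have e : (1 : ℝ) + (n : ℝ)⁻¹ = (n + 1) / n := by field_simp
    simp only [Function.comp_apply, hg, smul_eq_mul, inv_inv, Real.one_rpow]
    rw [e, Real.div_rpow (by positivity) hn0.le, Real.rpow_add hn0 s 1, Real.rpow_one]
    push_cast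
    field_simp
  have hlo : (fun n => a n - L / (s + 1) * g n) =o[atTop] g := by
    have h3 : Tendsto (fun n : ℕ => (a n / (n : ℝ) ^ s) / (g n / (n : ℝ) ^ s) - L / (s + 1)) atTop (𝓝 0) := by
      have := (ha.div gasym hs1.ne').sub_const (L / (s + 1))
      simpa using this
    have gne : ∀ᶠ n in atTop, g n / (n : ℝ) ^ s ≠ 0 := gasym.eventually_ne hs1.ne'
    refine (isLittleO_iff_tendsto' ?_).2 (h3.congr' ?_)
    · filter_upwards [gne] with n hn h0
      simp [h0] at hn
    · filter_upwards [gne] with n hn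
      have hn2 : g n ≠ 0 := fun h => hn (by simp [h])
      have hn3 : (n : ℝ) ^ s ≠ 0 := fun h => hn (by simp [h])
      field_simp
  have h5 := hlo.sum_range gnn gtop
  have h6 := h5.tendsto_div_nhds_zero
  have h7 := h6.add_const (L / (s + 1))
  rw [zero_add] at h7
  refine h7.congr' ?_
  filter_upwards [eventually_ge_atTop 1] with n hn
  have hn0 : (0 : ℝ) < n := by exact_mod_cast hn
  have hr : (n : ℝ) ^ (s + 1) ≠ 0 := (Real.rpow_pos_of_pos hn0 _).ne'
  rw [Finset.sum_sub_distrib, ← Finset.mul_sum, gsum]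
  field_simp
  ring

lemma poch_bound (x B : ℝ) (i : ℕ) (hx : ∀ l : ℕ, l < i → |x + l| ≤ B * i) (hB : 0 ≤ B) :
    ∀ m : ℕ, m ≤ i → |poch m x| ≤ (B * i) ^ m := by
  intro m
  induction m with
  | zero => intro _; simp [poch_zero]
  | succ m ih =>
    intro hm
    rw [poch_succ, abs_mul, pow_succ]
    exact mul_le_mul (ih (by omega)) (hx m (by omega)) (abs_nonneg _) (by positivity)

/-- Gamma ratio weight. -/
noncomputable def jw (α : ℝ) (i : ℕ) : ℝ := Real.Gamma (i + α + 1) / (Nat.factorial i : ℝ)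

lemma jw_pos {α : ℝ} (hα : -1 < α) (i : ℕ) : 0 < jw α i := by
  have : (0 : ℝ) ≤ i := by positivity
  exact div_pos (Real.Gamma_pos_of_pos (by linarith)) (by positivity)

lemma jU_pos {α : ℝ} (hα : -1 < α) (i : ℕ) : 0 < jU α i := by
  have : (0 : ℝ) ≤ i := by positivity
  exact div_pos one_pos (mul_pos (by positivity) (Real.Gamma_pos_of_pos (by linarith)))

lemma jc_bound (α β : ℝ) (hα : -1 < α) (i m : ℕ) :
    |jc α β i m| ≤ jw α i * (i : ℝ) ^ (2 * m) * ((2 + |α| + |β|) ^ m * jU α m) := by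
  have hw := jw_pos hα i
  have hU := jU_pos hα m
  rcases lt_or_ge i m with h | h
  · rw [jc_eq_zero α β h, abs_zero]; positivity
  · have hp := poch_bound (i + α + β + 1) (2 + |α| + |β|) i (by
      intro l hl
      have h1 : (l : ℝ) + 1 ≤ i := by exact_mod_cast hl
      have h0 : (0 : ℝ) ≤ l := by positivity
      have ha := abs_nonneg α
      have hb := abs_nonneg β
      have h2 : |α| ≤ |α| * i := le_mul_of_one_le_right ha (by linarith)
      have h3 : |β| ≤ |β| * i := le_mul_of_one_le_right hb (by linarith)
      have := neg_abs_le α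
      have := neg_abs_le β
      have := le_abs_self α
      have := le_abs_self β
      rw [abs_le]
      constructor <;> nlinarith) (by positivity) m h
    have hd : (Nat.descFactorial i m : ℝ) ≤ (i : ℝ) ^ m := by
      exact_mod_cast Nat.descFactorial_le_pow i m
    have e : jc α β i m = jw α i * (Nat.descFactorial i m : ℝ) * poch m (i + α + β + 1) * jU α m := by
      rw [jc, jw, jU]; ring
    rw [e, abs_mul, abs_mul, abs_mul, abs_of_pos hw, abs_of_pos hU, Nat.abs_cast]
    calc jw α i * (Nat.descFactorial i m : ℝ) * |poch m (i + α + β + 1)| * jU α m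
        ≤ jw α i * (i : ℝ) ^ m * ((2 + |α| + |β|) * i) ^ m * jU α m := by gcongr
      _ = _ := by rw [mul_pow]; ring

lemma invGamma_bound {α : ℝ} (hα : -1 < α) : ∃ G : ℝ, 0 < G ∧ ∀ m : ℕ, jU α m ≤ G / (Nat.factorial m : ℝ) := by
  have h1 : 0 < Real.Gamma (α + 1) := Real.Gamma_pos_of_pos (by linarith)
  have h2 : 0 < Real.Gamma (α + 2) := Real.Gamma_pos_of_pos (by linarith)
  have key : ∀ m : ℕ, Real.Gamma (α + 2) ≤ Real.Gamma (α + (m + 1 : ℕ) + 1) := by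
    intro m
    induction m with
    | zero => simp; rw [show α + 1 + 1 = α + 2 by ring]
    | succ m ih =>
      have hm : (0 : ℝ) ≤ m := by positivity
      refine ih.trans ?_
      have hp : 0 < Real.Gamma (α + (m + 1 : ℕ) + 1) := h2.trans_le ih
      rw [show α + ((m + 1 + 1 : ℕ) : ℝ) + 1 = (α + ((m + 1 : ℕ) : ℝ) + 1) + 1 by push_cast; ring,
        Real.Gamma_add_one (s := α + ((m + 1 : ℕ) : ℝ) + 1) (by push_cast; linarith)]
      refine le_mul_of_one_le_left hp.le ?_
      push_cast; linarith
  refine ⟨1 / Real.Gamma (α + 1) + 1 / Real.Gamma (α + 2), by positivity, fun m => ?_⟩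
  rw [jU, mul_comm, ← div_div]
  gcongr
  cases m with
  | zero => simp; positivity
  | succ m =>
    have : 1 / Real.Gamma (α + (m + 1 : ℕ) + 1) ≤ 1 / Real.Gamma (α + 2) :=
      one_div_le_one_div_of_le h2 (key m)
    have : 0 < 1 / Real.Gamma (α + 1) := by positivity
    linarith

/-- kernel weights -/
noncomputable def je (α β : ℝ) (j i : ℕ) : ℝ :=
  (Nat.factorial j : ℝ) / 2 ^ j * jc α β i j / jacobiNormSq α β i

/-- limit constant -/
noncomputable def jE (α β : ℝ) (j : ℕ) : ℝ :=
  (Nat.factorial j : ℝ) / 2 ^ j * jU α j / 2 ^ (α + β)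

lemma je_tendsto (α β : ℝ) (hα : -1 < α) (hβ : -1 < β) (j : ℕ) :
    Tendsto (fun i : ℕ => je α β j i / (i : ℝ) ^ (α + 2 * j + 1)) atTop (𝓝 (jE α β j)) := by
  have h := ((jc_tendsto α β hα j).const_mul ((Nat.factorial j : ℝ) / 2 ^ j)).div
    (normSq_tendsto α β hα hβ) (Real.rpow_pos_of_pos two_pos _).ne'
  refine h.congr' ?_
  filter_upwards [eventually_ge_atTop 1] with n hn
  have hn0 : (0 : ℝ) < n := by exact_mod_cast hn
  simp only [Pi.div_apply]
  rw [je, Real.rpow_add_one hn0.ne']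
  ring

/-- kernel sums -/
noncomputable def jS (α β : ℝ) (j n m : ℕ) : ℝ :=
  ∑ i ∈ Finset.range n, je α β j i * jc α β i m

lemma jS_tendsto (α β : ℝ) (hα : -1 < α) (hβ : -1 < β) (j m : ℕ) :
    Tendsto (fun n : ℕ => jS α β j n m / (n : ℝ) ^ (2 * α + 2 * j + 2 * m + 2)) atTop
      (𝓝 (jE α β j * jU α m / (2 * α + 2 * j + 2 * m + 2))) := by
  have h := (je_tendsto α β hα hβ j).mul (jc_tendsto α β hα m)
  have hj0 : (0 : ℝ) ≤ j := by positivity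
  have hm0 : (0 : ℝ) ≤ m := by positivity
  have h2 := sum_tendsto (s := 2 * α + 2 * j + 2 * m + 1) (L := jE α β j * jU α m)
    (a := fun i => je α β j i * jc α β i m) (by linarith) (by
      refine h.congr' ?_
      filter_upwards [eventually_ge_atTop 1] with n hn
      have hn0 : (0 : ℝ) < n := by exact_mod_cast hn
      rw [div_mul_div_comm, ← Real.rpow_add hn0]
      congr 2; ring)
  rw [show 2 * α + 2 * j + 2 * m + 1 + 1 = 2 * α + 2 * j + 2 * m + 2 by ring] at h2
  exact h2

lemma jS_bound (α β : ℝ) (hα : -1 < α) (hβ : -1 < β) (j : ℕ) :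
    ∃ C : ℝ, 0 < C ∧ ∀ n : ℕ, 1 ≤ n → ∀ m : ℕ,
      |jS α β j n m / (n : ℝ) ^ (2 * α + 2 * j + 2 * m + 2)| ≤ C * ((2 + |α| + |β|) ^ m * jU α m) := by
  have hw : Tendsto (fun n : ℕ => jw α n / (n : ℝ) ^ α) atTop (𝓝 1) := gammaRatio (by linarith)
  have hj0 : (0 : ℝ) ≤ j := by positivity
  have h := ((je_tendsto α β hα hβ j).abs).mul hw
  have h2 := sum_tendsto (s := 2 * α + 2 * j + 1) (L := |jE α β j| * 1)
    (a := fun i => |je α β j i| * jw α i) (by linarith) (by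
      refine h.congr' ?_
      filter_upwards [eventually_ge_atTop 1] with n hn
      have hn0 : (0 : ℝ) < n := by exact_mod_cast hn
      rw [abs_div, abs_of_pos (Real.rpow_pos_of_pos hn0 _), div_mul_div_comm, ← Real.rpow_add hn0]
      congr 2; ring)
  obtain ⟨C, hC⟩ := h2.bddAbove_range
  refine ⟨|C| + 1, by positivity, fun n hn m => ?_⟩
  have hn0 : (0 : ℝ) < n := by exact_mod_cast hn
  have hCn : (∑ i ∈ Finset.range n, |je α β j i| * jw α i) / (n : ℝ) ^ (2 * α + 2 * j + 1 + 1) ≤ C :=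
    hC ⟨n, rfl⟩
  have hU := jU_pos hα m
  set V : ℝ := (2 + |α| + |β|) ^ m * jU α m with hV
  have hV0 : 0 ≤ V := by positivity
  have hS : |jS α β j n m| ≤ (n : ℝ) ^ (2 * m) * V * ∑ i ∈ Finset.range n, |je α β j i| * jw α i := by
    rw [jS, Finset.mul_sum]
    refine (Finset.abs_sum_le_sum_abs _ _).trans (Finset.sum_le_sum fun i hi => ?_)
    have hi : (i : ℝ) ≤ n := by exact_mod_cast (Finset.mem_range.1 hi).le
    have hwi := jw_pos hα i
    rw [abs_mul]
    calc |je α β j i| * |jc α β i m| ≤ |je α β j i| * (jw α i * (i : ℝ) ^ (2 * m) * V) := by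
          gcongr; exact jc_bound α β hα i m
      _ ≤ |je α β j i| * (jw α i * (n : ℝ) ^ (2 * m) * V) := by gcongr
      _ = _ := by ring
  have hr : (n : ℝ) ^ (2 * α + 2 * j + 2 * m + 2) = (n : ℝ) ^ (2 * α + 2 * j + 1 + 1) * (n : ℝ) ^ (2 * m) := by
    rw [← Real.rpow_natCast (n : ℝ) (2 * m), ← Real.rpow_add hn0]; congr 1; push_cast; ring
  have hr0 := Real.rpow_pos_of_pos hn0 (2 * α + 2 * j + 1 + 1)
  rw [abs_div, abs_of_pos (Real.rpow_pos_of_pos hn0 _), hr]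
  calc _ ≤ ((n : ℝ) ^ (2 * m) * V * ∑ i ∈ Finset.range n, |je α β j i| * jw α i) / ((n : ℝ) ^ (2 * α + 2 * j + 1 + 1) * (n : ℝ) ^ (2 * m)) := by
        gcongr
    _ = (∑ i ∈ Finset.range n, |je α β j i| * jw α i) / (n : ℝ) ^ (2 * α + 2 * j + 1 + 1) * V := by
        field_simp
    _ ≤ (|C| + 1) * V := by
        gcongr
        linarith [le_abs_self C]

/-- The coefficient `M_n P_n^{(j)}(1) / (1 + M_n K)` -/
noncomputable def jA (α β : ℝ) (j : ℕ) (Ms : ℕ → ℝ) (n : ℕ) : ℝ :=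
  Ms n * (Polynomial.derivative^[j] (jacobiP α β n)).eval 1 /
        (1 + Ms n * kernK α β j j (n - 1) 1 1)

/-- The critical constant `D`. -/
noncomputable def jD (α β : ℝ) (j : ℕ) : ℝ :=
  Real.Gamma (α + j + 1) ^ 2 * (2 : ℝ) ^ (α + β + 2 * (j : ℝ) + 1) * (α + 2 * j + 1)

lemma jD_pos (α β : ℝ) (hα : -1 < α) (j : ℕ) : 0 < jD α β j := by
  have hj0 : (0 : ℝ) ≤ j := by positivity
  have h1 : 0 < Real.Gamma (α + j + 1) := Real.Gamma_pos_of_pos (by linarith)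
  have h2 : 0 < α + 2 * j + 1 := by linarith
  have h3 : (0 : ℝ) < (2 : ℝ) ^ (α + β + 2 * (j : ℝ) + 1) := Real.rpow_pos_of_pos two_pos _
  rw [jD]; positivity

lemma jD_identity (α β : ℝ) (hα : -1 < α) (j : ℕ) :
    (Nat.factorial j : ℝ) / 2 ^ j * jE α β j * jU α j = 2 * (α + 2 * j + 1) / jD α β j := by
  have hj0 : (0 : ℝ) ≤ j := by positivity
  have h1 : 0 < Real.Gamma (α + j + 1) := Real.Gamma_pos_of_pos (by linarith)
  have h2 : 0 < α + 2 * j + 1 := by linarith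
  have h3 : (0 : ℝ) < (2 : ℝ) ^ (α + β) := Real.rpow_pos_of_pos two_pos _
  have e : (2 : ℝ) ^ (α + β + 2 * (j : ℝ) + 1) = 2 ^ (α + β) * (2 ^ j * 2 ^ j) * 2 := by
    rw [Real.rpow_add two_pos, Real.rpow_add two_pos, Real.rpow_one, ← pow_add, ← Real.rpow_natCast (2 : ℝ) (j + j)]
    congr 3; push_cast; ring
  rw [jD, jE, jU, e]
  have f : (j.factorial : ℝ) ≠ 0 := by positivity
  generalize α + 2 * (j : ℝ) + 1 = X at h2
  field_simp

lemma kernK_eq (α β : ℝ) (hα : -1 < α) (hβ : -1 < β) (j : ℕ) {n : ℕ} (hn : 1 ≤ n) :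
    kernK α β j j (n - 1) 1 1 = (Nat.factorial j : ℝ) / 2 ^ j * jS α β j n j := by
  rw [kernK, jS, Finset.mul_sum, show n - 1 + 1 = n by omega]
  refine Finset.sum_congr rfl fun i _ => ?_
  rw [jacobiP_deriv α β hα hβ, je]
  ring

lemma jA_tendsto (α β : ℝ) (hα : -1 < α) (hβ : -1 < β) (j : ℕ) (M : ℝ) (hM : 0 < M) (Ms : ℕ → ℝ)
    (hlim : Tendsto (fun n : ℕ => Ms n * (n : ℝ) ^ (2 * (α + 2 * j + 1))) atTop (𝓝 M)) :
    Tendsto (fun n : ℕ => jA α β j Ms n * (n : ℝ) ^ (α + 2 * j + 2)) atTop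
      (𝓝 (M * ((Nat.factorial j : ℝ) / 2 ^ j * jU α j) / (1 + M / jD α β j))) := by
  have hj0 : (0 : ℝ) ≤ j := by positivity
  have hD := jD_pos α β hα j
  have h1 : Tendsto (fun n : ℕ => (Nat.factorial j : ℝ) / 2 ^ j * (jS α β j n j / (n : ℝ) ^ (2 * α + 2 * j + 2 * j + 2)))
      atTop (𝓝 (1 / jD α β j)) := by
    have := (jS_tendsto α β hα hβ j j).const_mul ((Nat.factorial j : ℝ) / 2 ^ j)
    have e : (Nat.factorial j : ℝ) / 2 ^ j * (jE α β j * jU α j / (2 * α + 2 * j + 2 * j + 2)) = 1 / jD α β j := by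
      rw [← mul_div_assoc, ← mul_assoc, jD_identity α β hα]
      have h2 : α + 2 * j + 1 ≠ 0 := by linarith
      rw [show 2 * α + 2 * j + 2 * j + 2 = 2 * (α + 2 * j + 1) by ring]
      field_simp
    rwa [e] at this
  have h2 := (hlim.mul ((jc_tendsto α β hα j).const_mul ((Nat.factorial j : ℝ) / 2 ^ j))).div
    ((hlim.mul h1).const_add 1) (by positivity)
  rw [mul_one_div] at h2
  refine h2.congr' ?_
  filter_upwards [eventually_ge_atTop 1] with n hn
  have hn0 : (0 : ℝ) < n := by exact_mod_cast hn
  simp only [Pi.div_apply]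
  rw [jA, kernK_eq α β hα hβ j hn, jacobiP_deriv α β hα hβ,
    show 2 * α + 2 * j + 2 * j + 2 = 2 * (α + 2 * j + 1) by ring,
    show 2 * (α + 2 * j + 1) = (α + 2 * j + 2) + (α + 2 * j) by ring, Real.rpow_add hn0]
  have r1 := (Real.rpow_pos_of_pos hn0 (α + 2 * j + 2)).ne'
  have r2 := (Real.rpow_pos_of_pos hn0 (α + 2 * j)).ne'
  have e1 : Ms n * ((n : ℝ) ^ (α + 2 * j + 2) * (n : ℝ) ^ (α + 2 * j)) * ((Nat.factorial j : ℝ) / 2 ^ j * (jS α β j n j / ((n : ℝ) ^ (α + 2 * j + 2) * (n : ℝ) ^ (α + 2 * j)))) = Ms n * ((Nat.factorial j : ℝ) / 2 ^ j * jS α β j n j) := by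
    field_simp
  have e2 : Ms n * ((n : ℝ) ^ (α + 2 * j + 2) * (n : ℝ) ^ (α + 2 * j)) * ((Nat.factorial j : ℝ) / 2 ^ j * (jc α β n j / (n : ℝ) ^ (α + 2 * j))) = Ms n * ((Nat.factorial j : ℝ) / 2 ^ j * jc α β n j) * (n : ℝ) ^ (α + 2 * j + 2) := by
    field_simp
  rw [e1, e2]
  ring

/-- normalised coefficients of `Q_n`. -/
noncomputable def jq (α β : ℝ) (j : ℕ) (Ms : ℕ → ℝ) (n m : ℕ) : ℝ :=
  (jc α β n m - jA α β j Ms n * jS α β j n m) / (n : ℝ) ^ (α + 2 * m)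

/-- The numbers `θ_i`. -/
noncomputable def jth (α β : ℝ) (j : ℕ) (M : ℝ) (i : ℕ) : ℝ :=
  1 - M * (α + 2 * j + 1) / ((α + j + i + 1) * (M + jD α β j))

lemma jq_split (α β : ℝ) (j : ℕ) (Ms : ℕ → ℝ) {n : ℕ} (hn : 1 ≤ n) (m : ℕ) :
    jq α β j Ms n m = jc α β n m / (n : ℝ) ^ (α + 2 * m) -
      (jA α β j Ms n * (n : ℝ) ^ (α + 2 * j + 2)) * (jS α β j n m / (n : ℝ) ^ (2 * α + 2 * j + 2 * m + 2)) := by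
  have hn0 : (0 : ℝ) < n := by exact_mod_cast hn
  have e : (n : ℝ) ^ (2 * α + 2 * j + 2 * m + 2) = (n : ℝ) ^ (α + 2 * j + 2) * (n : ℝ) ^ (α + 2 * m) := by
    rw [← Real.rpow_add hn0]; congr 1; ring
  have r1 := (Real.rpow_pos_of_pos hn0 (α + 2 * j + 2)).ne'
  have r2 := (Real.rpow_pos_of_pos hn0 (α + 2 * m)).ne'
  rw [jq, e]
  field_simp

lemma jq_tendsto (α β : ℝ) (hα : -1 < α) (hβ : -1 < β) (j : ℕ) (M : ℝ) (hM : 0 < M) (Ms : ℕ → ℝ)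
    (hlim : Tendsto (fun n : ℕ => Ms n * (n : ℝ) ^ (2 * (α + 2 * j + 1))) atTop (𝓝 M)) (m : ℕ) :
    Tendsto (fun n : ℕ => jq α β j Ms n m) atTop (𝓝 (jth α β j M m * jU α m)) := by
  have hj0 : (0 : ℝ) ≤ j := by positivity
  have hm0 : (0 : ℝ) ≤ m := by positivity
  have hD := jD_pos α β hα j
  have h := (jc_tendsto α β hα m).sub ((jA_tendsto α β hα hβ j M hM Ms hlim).mul (jS_tendsto α β hα hβ j m))
  have e : jU α m - M * ((Nat.factorial j : ℝ) / 2 ^ j * jU α j) / (1 + M / jD α β j) *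
      (jE α β j * jU α m / (2 * α + 2 * j + 2 * m + 2)) = jth α β j M m * jU α m := by
    have hid := jD_identity α β hα j
    have d1 : α + j + m + 1 ≠ 0 := by linarith
    have d2 : M + jD α β j ≠ 0 := by positivity
    have : M * ((Nat.factorial j : ℝ) / 2 ^ j * jU α j) / (1 + M / jD α β j) *
      (jE α β j * jU α m / (2 * α + 2 * j + 2 * m + 2)) =
      M * ((Nat.factorial j : ℝ) / 2 ^ j * jE α β j * jU α j) / (1 + M / jD α β j) *
      (jU α m / (2 * (α + j + m + 1))) := by
      rw [show 2 * α + 2 * j + 2 * m + 2 = 2 * (α + j + m + 1) by ring]; ring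
    rw [this, hid, jth, show 1 + M / jD α β j = (M + jD α β j) / jD α β j by field_simp; ring]
    field_simp
  rw [e] at h
  refine h.congr' ?_
  filter_upwards [eventually_ge_atTop 1] with n hn
  rw [jq_split α β j Ms hn]

lemma jq_bound (α β : ℝ) (hα : -1 < α) (hβ : -1 < β) (j : ℕ) (M : ℝ) (hM : 0 < M) (Ms : ℕ → ℝ)
    (hlim : Tendsto (fun n : ℕ => Ms n * (n : ℝ) ^ (2 * (α + 2 * j + 1))) atTop (𝓝 M)) :
    ∃ C : ℝ, ∀ᶠ n : ℕ in atTop, ∀ m : ℕ, |jq α β j Ms n m| ≤ C * ((2 + |α| + |β|) ^ m / (Nat.factorial m : ℝ)) := by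
  obtain ⟨G, hG0, hG⟩ := invGamma_bound hα
  obtain ⟨C, hC0, hC⟩ := jS_bound α β hα hβ j
  have hw : Tendsto (fun n : ℕ => jw α n / (n : ℝ) ^ α) atTop (𝓝 1) := gammaRatio (by linarith)
  have hA := (jA_tendsto α β hα hβ j M hM Ms hlim).abs
  set A := |M * ((Nat.factorial j : ℝ) / 2 ^ j * jU α j) / (1 + M / jD α β j)| with hAdef
  refine ⟨(2 + (A + 1) * C) * G, ?_⟩
  filter_upwards [eventually_ge_atTop 1, hw.eventually_le_const (show (1:ℝ) < 2 by norm_num),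
    hA.eventually_le_const (show A < A + 1 by linarith)] with n hn h1 h2 m
  have hn0 : (0 : ℝ) < n := by exact_mod_cast hn
  have hU := jU_pos hα m
  have hA0 : 0 ≤ A := abs_nonneg _
  have b1 : |jc α β n m / (n : ℝ) ^ (α + 2 * m)| ≤ 2 * ((2 + |α| + |β|) ^ m * jU α m) := by
    rw [abs_div, abs_of_pos (Real.rpow_pos_of_pos hn0 _), rpow_split α m hn]
    have r := Real.rpow_pos_of_pos hn0 α
    calc _ ≤ (jw α n * (n : ℝ) ^ (2 * m) * ((2 + |α| + |β|) ^ m * jU α m)) / ((n : ℝ) ^ α * (n : ℝ) ^ m * (n : ℝ) ^ m) := by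
          gcongr; exact jc_bound α β hα n m
      _ = jw α n / (n : ℝ) ^ α * ((2 + |α| + |β|) ^ m * jU α m) := by
          rw [two_mul, pow_add]; field_simp
      _ ≤ _ := by gcongr
  rw [jq_split α β j Ms hn]
  calc _ ≤ |jc α β n m / (n : ℝ) ^ (α + 2 * m)| + |(jA α β j Ms n * (n : ℝ) ^ (α + 2 * j + 2)) * (jS α β j n m / (n : ℝ) ^ (2 * α + 2 * j + 2 * m + 2))| := abs_sub _ _
    _ ≤ 2 * ((2 + |α| + |β|) ^ m * jU α m) + (A + 1) * (C * ((2 + |α| + |β|) ^ m * jU α m)) := by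
        rw [abs_mul]
        gcongr
        exact hC n hn m
    _ = (2 + (A + 1) * C) * ((2 + |α| + |β|) ^ m * jU α m) := by ring
    _ ≤ (2 + (A + 1) * C) * ((2 + |α| + |β|) ^ m * (G / (Nat.factorial m : ℝ))) := by
        gcongr; exact hG m
    _ = _ := by ring

lemma theta_all (α β : ℝ) (hα : -1 < α) (j : ℕ) (M : ℝ) (hM : 0 < M) (b : ℕ → ℝ)
    (hb : ∀ i, i ≤ j + 1 →
      (∑ k ∈ Finset.range (i + 1),
          b k * (Nat.choose i k : ℝ) * (-1) ^ k * (Nat.factorial k : ℝ) * 2 ^ k *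
            Real.Gamma (α + i + 1) / Real.Gamma (α + i + k + 1)) = jth α β j M i) (m : ℕ) :
    ∑ k ∈ Finset.range (j + 2),
          b k * (Nat.choose m k : ℝ) * (-1) ^ k * (Nat.factorial k : ℝ) * 2 ^ k *
            Real.Gamma (α + m + 1) / Real.Gamma (α + m + k + 1) = jth α β j M m := by
  have hj0 : (0 : ℝ) ≤ j := by positivity
  have hD := jD_pos α β hα j
  set c : ℝ := M * (α + 2 * j + 1) / (M + jD α β j) with hc
  set L : ℕ → ℝ := fun m => ∑ k ∈ Finset.range (j + 2),
          b k * (Nat.choose m k : ℝ) * (-1) ^ k * (Nat.factorial k : ℝ) * 2 ^ k *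
            Real.Gamma (α + m + 1) / Real.Gamma (α + m + k + 1) with hL
  have hb' : ∀ i, i ≤ j + 1 → L i = jth α β j M i := by
    intro i hi
    rw [← hb i hi]
    symm
    refine Finset.sum_subset (Finset.range_subset_range.2 (by omega)) fun k _ hk => ?_
    have : i < k := by simpa using hk
    simp [Nat.choose_eq_zero_of_lt this]
  set R : Polynomial ℝ := (∑ k ∈ Finset.range (j + 2), Polynomial.C (b k * (-1) ^ k * 2 ^ k) *
    (descPochhammer ℝ k * (ascPochhammer ℝ (j + 1 - k)).comp (Polynomial.X + Polynomial.C (α + k + 1)))) -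
    ((ascPochhammer ℝ (j + 1)).comp (Polynomial.X + Polynomial.C (α + 1)) -
      Polynomial.C c * (ascPochhammer ℝ j).comp (Polynomial.X + Polynomial.C (α + 1))) with hR
  have hcomp : ∀ (N : ℕ) (x : ℝ), ((ascPochhammer ℝ N).comp (Polynomial.X + Polynomial.C x)).natDegree = N := by
    intro N x
    rw [Polynomial.natDegree_comp]; simp [ascPochhammer_natDegree]
  have hdeg : R.natDegree < j + 2 := by
    rw [Nat.lt_succ_iff]
    refine (Polynomial.natDegree_sub_le _ _).trans (max_le ?_ ((Polynomial.natDegree_sub_le _ _).trans (max_le ?_ ?_)))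
    · refine Polynomial.natDegree_sum_le_of_forall_le _ _ fun k hk => ?_
      have hk : k < j + 2 := by simpa using hk
      refine (Polynomial.natDegree_C_mul_le _ _).trans (Polynomial.natDegree_mul_le.trans ?_)
      rw [hcomp, descPochhammer_natDegree]; omega
    · rw [hcomp]
    · refine (Polynomial.natDegree_C_mul_le _ _).trans ?_
      rw [hcomp]; omega
  have heval : ∀ i : ℕ, R.eval (i : ℝ) = poch (j + 1) (α + i + 1) * (L i - jth α β j M i) := by
    intro i
    have hi0 : (0 : ℝ) ≤ i := by positivity
    have hp0 : 0 < α + i + 1 := by linarith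
    have g0 : Real.Gamma (α + i + 1) ≠ 0 := (Real.Gamma_pos_of_pos hp0).ne'
    rw [hR, Polynomial.eval_sub, mul_sub, Polynomial.eval_finsetSum, hL, Finset.mul_sum]
    congr 1
    · refine Finset.sum_congr rfl fun k hk => ?_
      have hk : k < j + 2 := by simpa using hk
      have hk0 : (0 : ℝ) ≤ k := by positivity
      have hp1 : 0 < α + i + k + 1 := by linarith
      have g1 : Real.Gamma (α + i + k + 1) ≠ 0 := (Real.Gamma_pos_of_pos hp1).ne'
      have e1 := Gamma_add_nat hp1 (j + 1 - k)
      have e2 := Gamma_add_nat hp0 (j + 1)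
      have e3 : α + i + k + 1 + ((j + 1 - k : ℕ) : ℝ) = α + i + 1 + ((j + 1 : ℕ) : ℝ) := by
        push_cast [Nat.cast_sub (show k ≤ j + 1 by omega)]; ring
      rw [e3, e2] at e1
      have e4 : (Nat.descFactorial i k : ℝ) = (Nat.factorial k : ℝ) * (Nat.choose i k : ℝ) := by
        exact_mod_cast Nat.descFactorial_eq_factorial_mul_choose i k
      simp only [Polynomial.eval_mul, Polynomial.eval_C, Polynomial.eval_comp, Polynomial.eval_add, Polynomial.eval_X,
        descPochhammer_eval_eq_descFactorial]
      rw [e4, show (i : ℝ) + (α + k + 1) = α + i + k + 1 by ring]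
      change _ * (_ * poch (j + 1 - k) (α + i + k + 1)) = _
      field_simp
      linear_combination (-(b k * (Nat.choose i k : ℝ))) * e1
    · simp only [Polynomial.eval_mul, Polynomial.eval_C, Polynomial.eval_comp, Polynomial.eval_add, Polynomial.eval_X, Polynomial.eval_sub]
      rw [show (i : ℝ) + (α + 1) = α + i + 1 by ring]
      change poch (j + 1) _ - c * poch j _ = _
      rw [poch_succ, jth, hc]
      have d1 : α + j + i + 1 ≠ 0 := by linarith
      have d2 : M + jD α β j ≠ 0 := by positivity
      field_simp
      ring
  have hR0 : R = 0 := by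
    refine Polynomial.eq_zero_of_natDegree_lt_card_of_eval_eq_zero R (ι := Fin (j + 2)) (f := fun i => ((i : ℕ) : ℝ)) ?_ ?_ ?_
    · intro x y hxy
      have hxy' : ((x : ℕ) : ℝ) = ((y : ℕ) : ℝ) := hxy
      exact Fin.ext (by exact_mod_cast hxy')
    · intro i
      rw [heval, hb' _ (by omega), sub_self, mul_zero]
    · simpa using hdeg
  have hm := heval m
  rw [hR0, Polynomial.eval_zero] at hm
  have hm0 : (0 : ℝ) ≤ m := by positivity
  have hp0 : 0 < α + m + 1 := by linarith
  have hpp : poch (j + 1) (α + m + 1) ≠ 0 := by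
    intro h0
    have e2 := Gamma_add_nat hp0 (j + 1)
    rw [h0, zero_mul] at e2
    exact (Real.Gamma_pos_of_pos (by positivity)).ne' e2
  rcases mul_eq_zero.1 hm.symm with h | h
  · exact absurd h hpp
  · exact sub_eq_zero.1 h

lemma besselG_hasSum {ν : ℝ} (hν : -1 < ν) (z : ℂ) :
    HasSum (fun k : ℕ => ((jU ν k : ℝ) : ℂ) * (-(z / 2) ^ 2) ^ k) (besselG ν z) := by
  obtain ⟨G, hG0, hG⟩ := invGamma_bound hν
  have hs : Summable (fun k : ℕ => ((jU ν k : ℝ) : ℂ) * (-(z / 2) ^ 2) ^ k) := by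
    refine Summable.of_norm_bounded (g := fun k : ℕ => G * (‖(-(z / 2) ^ 2)‖ ^ k / (Nat.factorial k : ℝ))) ((Real.summable_pow_div_factorial _).mul_left G) fun k => ?_
    rw [norm_mul, norm_pow, Complex.norm_real, Real.norm_of_nonneg (jU_pos hν k).le]
    calc _ ≤ G / (Nat.factorial k : ℝ) * ‖(-(z / 2) ^ 2)‖ ^ k := by gcongr; exact hG k
      _ = _ := by ring
  convert hs.hasSum using 1
  rw [besselG]
  refine tsum_congr fun k => ?_
  have : (k : ℂ) + (ν : ℂ) + 1 = ((ν + k + 1 : ℝ) : ℂ) := by push_cast; ring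
  rw [this, Complex.Gamma_ofReal, jU, neg_pow ((z / 2) ^ 2) k, pow_mul]
  push_cast
  generalize z / 2 = w
  ring

lemma limit_hasSum (α β : ℝ) (hα : -1 < α) (j : ℕ) (M : ℝ) (hM : 0 < M) (b : ℕ → ℝ)
    (hb : ∀ i, i ≤ j + 1 →
      (∑ k ∈ Finset.range (i + 1),
          b k * (Nat.choose i k : ℝ) * (-1) ^ k * (Nat.factorial k : ℝ) * 2 ^ k *
            Real.Gamma (α + i + 1) / Real.Gamma (α + i + k + 1)) = jth α β j M i) (z : ℂ) :
    HasSum (fun m : ℕ => ((jth α β j M m * jU α m : ℝ) : ℂ) * (-(z / 2) ^ 2) ^ m)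
      (∑ i ∈ Finset.range (j + 2),
        ((b i : ℝ) : ℂ) * 2 ^ i * (z / 2) ^ (2 * i) * besselG (α + 2 * i) z) := by
  have h1 : ∀ i ∈ Finset.range (j + 2), HasSum (fun m : ℕ => if i ≤ m then
      ((b i : ℝ) : ℂ) * 2 ^ i * (-1) ^ i * ((jU (α + 2 * i) (m - i) : ℝ) : ℂ) * (-(z / 2) ^ 2) ^ m else 0)
      (((b i : ℝ) : ℂ) * 2 ^ i * (z / 2) ^ (2 * i) * besselG (α + 2 * i) z) := by
    intro i _
    have hi0 : (0 : ℝ) ≤ i := by positivity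
    have h := (besselG_hasSum (ν := α + 2 * i) (by linarith) z).mul_left (((b i : ℝ) : ℂ) * 2 ^ i * (z / 2) ^ (2 * i))
    rw [← (add_left_injective i).hasSum_iff]
    · refine Eq.mp (congrArg (fun f : ℕ → ℂ => HasSum f _) (funext fun k => ?_)) h
      symm
      simp only [Function.comp_apply, Nat.le_add_left, if_true, Nat.add_sub_cancel]
      rw [pow_add, neg_pow ((z / 2) ^ 2) i, pow_mul]
      have : (-1 : ℂ) ^ i * (-1) ^ i = 1 := by rw [← mul_pow]; simp
      linear_combination (((b i : ℝ) : ℂ) * 2 ^ i * ((jU (α + 2 * i) k : ℝ) : ℂ) * (-(z / 2) ^ 2) ^ k * ((z / 2) ^ 2) ^ i) * this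
    · intro m hm
      rw [if_neg]
      intro him
      exact hm ⟨m - i, Nat.sub_add_cancel him⟩
  convert hasSum_sum h1 using 2 with m
  rw [← theta_all α β hα j M hM b hb m, Finset.sum_mul, Complex.ofReal_sum, Finset.sum_mul]
  refine Finset.sum_congr rfl fun i _ => ?_
  split_ifs with him
  · congr 1
    have hm0 : (0 : ℝ) ≤ m := by positivity
    have hi0 : (0 : ℝ) ≤ i := by positivity
    have g0 : Real.Gamma (α + m + 1) ≠ 0 := (Real.Gamma_pos_of_pos (by linarith)).ne'
    have g1 : Real.Gamma (α + m + i + 1) ≠ 0 := (Real.Gamma_pos_of_pos (by linarith)).ne'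
    have : b i * (Nat.choose m i : ℝ) * (-1) ^ i * (Nat.factorial i : ℝ) * 2 ^ i *
            Real.Gamma (α + m + 1) / Real.Gamma (α + m + i + 1) * jU α m = 
            b i * 2 ^ i * (-1) ^ i * jU (α + 2 * i) (m - i) := by
      rw [jU, jU, Nat.cast_choose ℝ him, Nat.cast_sub him, show α + 2 * i + ((m : ℝ) - i) + 1 = α + m + i + 1 by ring]
      have f1 : (m.factorial : ℝ) ≠ 0 := by positivity
      have f2 : (i.factorial : ℝ) ≠ 0 := by positivity
      have f3 : ((m - i).factorial : ℝ) ≠ 0 := by positivity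
      field_simp
    rw [this]; push_cast; ring
  · simp [Nat.choose_eq_zero_of_lt (not_le.1 him)]

lemma unif_lemma (c : ℕ → ℕ → ℝ) (l : ℕ → ℝ) (C B : ℝ) (hB : 0 ≤ B)
    (h1 : ∀ m, Tendsto (fun n => c n m) atTop (𝓝 (l m)))
    (h2 : ∀ᶠ n in atTop, ∀ m, |c n m| ≤ C * (B ^ m / (Nat.factorial m : ℝ))) 
    (K : Set ℂ) (hK : IsCompact K) :
    TendstoUniformlyOn (fun (n : ℕ) (z : ℂ) => ∑' m, ((c n m : ℝ) : ℂ) * (-(z / 2) ^ 2) ^ m)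
      (fun z => ∑' m, ((l m : ℝ) : ℂ) * (-(z / 2) ^ 2) ^ m) atTop K := by
  obtain ⟨R0, hR0⟩ := hK.isBounded.exists_norm_le
  set R : ℝ := (|R0| / 2) ^ 2 with hR
  have hRn : 0 ≤ R := by positivity
  have hz : ∀ z ∈ K, ‖-(z / 2) ^ 2‖ ≤ R := by
    intro z hz
    rw [norm_neg, norm_pow, norm_div, Complex.norm_ofNat, hR]
    gcongr
    exact (hR0 z hz).trans (le_abs_self _)
  have h3 : ∀ m, |l m| ≤ C * (B ^ m / (Nat.factorial m : ℝ)) := fun m =>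
    le_of_tendsto (h1 m).abs (h2.mono fun n hn => hn m)
  have hsum : Summable (fun m : ℕ => (C * (B ^ m / (Nat.factorial m : ℝ))) * R ^ m) := by
    have := (Real.summable_pow_div_factorial (B * R)).mul_left C
    refine this.congr fun m => ?_
    rw [mul_pow]; ring
  have hT : Tendsto (fun n => ∑' m, |l m - c n m| * R ^ m) atTop (𝓝 (∑' m : ℕ, 0)) := by
    refine tendsto_tsum_of_dominated_convergence (bound := fun m : ℕ => 2 * ((C * (B ^ m / (Nat.factorial m : ℝ))) * R ^ m)) (hsum.mul_left 2) ?_ ?_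
    · intro m
      have := (((h1 m).const_sub (l m)).abs).mul_const (R ^ m)
      simpa using this
    · filter_upwards [h2] with n hn m
      rw [Real.norm_of_nonneg (by positivity), ← mul_assoc]
      gcongr
      calc |l m - c n m| ≤ |l m| + |c n m| := abs_sub _ _
        _ ≤ _ := by linarith [h3 m, hn m]
  rw [tsum_zero] at hT
  rw [Metric.tendstoUniformlyOn_iff]
  intro ε hε
  filter_upwards [h2, hT.eventually_lt_const hε] with n hn hlt z hzK
  have gen : ∀ a : ℕ → ℝ, (∀ m, |a m| ≤ C * (B ^ m / (Nat.factorial m : ℝ))) →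
      Summable (fun m => ((a m : ℝ) : ℂ) * (-(z / 2) ^ 2) ^ m) := by
    intro a ha
    refine Summable.of_norm_bounded hsum fun m => ?_
    rw [norm_mul, norm_pow, Complex.norm_real]
    have := (abs_nonneg _).trans (ha m)
    exact mul_le_mul (ha m) (pow_le_pow_left₀ (norm_nonneg _) (hz z hzK) m) (by positivity) this
  have s1 : Summable (fun m => |l m - c n m| * R ^ m) := by
    refine Summable.of_nonneg_of_le (fun m => by positivity) (fun m => ?_) (hsum.mul_left 2)
    rw [← mul_assoc]
    gcongr
    calc |l m - c n m| ≤ |l m| + |c n m| := abs_sub _ _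
      _ ≤ _ := by linarith [h3 m, hn m]
  rw [dist_eq_norm, ← (gen l h3).tsum_sub (gen (c n) hn)]
  refine lt_of_le_of_lt ?_ hlt
  refine tsum_of_norm_bounded s1.hasSum fun m => ?_
  rw [← sub_mul, norm_mul, norm_pow, ← Complex.ofReal_sub, Complex.norm_real, Real.norm_eq_abs]
  gcongr
  exact hz z hzK

lemma aeval_jacobiP (α β : ℝ) (hα : -1 < α) (hβ : -1 < β) {i n : ℕ} (hin : i ≤ n) (x : ℂ) :
    Polynomial.aeval x (jacobiP α β i) = ∑ m ∈ Finset.range (n + 1), ((jc α β i m : ℝ) : ℂ) * (2⁻¹ * (x - 1)) ^ m := by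
  rw [jacobiP_eq α β hα hβ, map_sum]
  have : ∀ m ∈ Finset.range (i + 1), Polynomial.aeval x (Polynomial.C (jc α β i m) * (Polynomial.C (2⁻¹ : ℝ) * (Polynomial.X - 1)) ^ m) = 
    ((jc α β i m : ℝ) : ℂ) * (2⁻¹ * (x - 1)) ^ m := by
    intro m _
    simp
  rw [Finset.sum_congr rfl this]
  refine Finset.sum_subset (Finset.range_subset_range.2 (by omega)) fun m _ hm => ?_
  have : i < m := by simpa using hm
  simp [jc_eq_zero α β this]

lemma aeval_sobQ (α β : ℝ) (hα : -1 < α) (hβ : -1 < β) (j : ℕ) (Ms : ℕ → ℝ) {n : ℕ} (hn : 1 ≤ n) (z : ℂ) :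
    Polynomial.aeval (1 - z ^ 2 / (2 * (n : ℂ) ^ 2)) (sobQ α β j Ms n) / (((n : ℝ) ^ α : ℝ) : ℂ) =
      ∑' m, ((jq α β j Ms n m : ℝ) : ℂ) * (-(z / 2) ^ 2) ^ m := by
  have hn0 : (0 : ℝ) < n := by exact_mod_cast hn
  have hnC : (n : ℂ) ≠ 0 := by exact_mod_cast hn0.ne'
  have hr0 := Real.rpow_pos_of_pos hn0 α
  set τ : ℂ := 2⁻¹ * (1 - z ^ 2 / (2 * (n : ℂ) ^ 2) - 1) with hτ
  have hτ2 : τ = (-(z / 2) ^ 2) / (n : ℂ) ^ 2 := by rw [hτ]; field_simp; ring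
  have hk : Polynomial.aeval (1 - z ^ 2 / (2 * (n : ℂ) ^ 2)) (kernKPoly α β j (n - 1)) =
      ∑ m ∈ Finset.range (n + 1), ((jS α β j n m : ℝ) : ℂ) * τ ^ m := by
    rw [kernKPoly, map_sum, show n - 1 + 1 = n by omega]
    have : ∀ i ∈ Finset.range n, Polynomial.aeval (1 - z ^ 2 / (2 * (n : ℂ) ^ 2)) (Polynomial.C ((Polynomial.derivative^[j] (jacobiP α β i)).eval 1 / jacobiNormSq α β i) *
      jacobiP α β i) = ∑ m ∈ Finset.range (n + 1), ((je α β j i * jc α β i m : ℝ) : ℂ) * τ ^ m := by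
      intro i hi
      have hi : i < n := by simpa using hi
      rw [map_mul, aeval_jacobiP α β hα hβ hi.le, Polynomial.aeval_C, jacobiP_deriv α β hα hβ, Finset.mul_sum]
      refine Finset.sum_congr rfl fun m _ => ?_
      rw [je, Complex.coe_algebraMap]
      push_cast
      ring
    rw [Finset.sum_congr rfl this, Finset.sum_comm]
    refine Finset.sum_congr rfl fun m _ => ?_
    rw [jS, Complex.ofReal_sum, Finset.sum_mul]
  have hQ : Polynomial.aeval (1 - z ^ 2 / (2 * (n : ℂ) ^ 2)) (sobQ α β j Ms n) =
      ∑ m ∈ Finset.range (n + 1), ((jc α β n m - jA α β j Ms n * jS α β j n m : ℝ) : ℂ) * τ ^ m := by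
    rw [sobQ, map_sub, map_mul, hk, aeval_jacobiP α β hα hβ le_rfl, Polynomial.aeval_C, Finset.mul_sum,
      ← Finset.sum_sub_distrib]
    refine Finset.sum_congr rfl fun m _ => ?_
    rw [Complex.coe_algebraMap, jA]
    push_cast
    ring
  rw [hQ, Finset.sum_div, tsum_eq_sum (s := Finset.range (n + 1))]
  · refine Finset.sum_congr rfl fun m _ => ?_
    rw [jq, rpow_split α m hn, hτ2, div_pow]
    push_cast
    have : (((n : ℝ) ^ α : ℝ) : ℂ) ≠ 0 := by exact_mod_cast hr0.ne'
    field_simp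
    try ring
  · intro m hm
    have hm : n < m := by simpa using hm
    have : jS α β j n m = 0 := by
      refine Finset.sum_eq_zero fun i hi => ?_
      have hi : i < n := by simpa using hi
      rw [jc_eq_zero α β (by omega), mul_zero]
    simp [jq, jc_eq_zero α β hm, this]
/-- Mehler–Heine formula for `Q_n` when `γ = 2(α+2j+1)`. -/
theorem sobQ_mehlerHeine_critical_gamma (α β : ℝ) (hα : -1 < α) (hβ : -1 < β) (j : ℕ)
    (γ M : ℝ) (hM : 0 < M) (Ms : ℕ → ℝ) (hMs : ∀ n, 0 ≤ Ms n)
    (hlim : Filter.Tendsto (fun n : ℕ => Ms n * (n : ℝ) ^ γ) Filter.atTop (nhds M))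
    (hγ : γ = 2 * (α + 2 * j + 1)) (b : ℕ → ℝ)
    (hb : ∀ i, i ≤ j + 1 →
      (∑ k ∈ Finset.range (i + 1),
          b k * (Nat.choose i k : ℝ) * (-1) ^ k * (Nat.factorial k : ℝ) * 2 ^ k *
            Real.Gamma (α + i + 1) / Real.Gamma (α + i + k + 1)) =
        (M * ((i : ℝ) - j) +
            Real.Gamma (α + j + 1) ^ 2 * (2 : ℝ) ^ (α + β + 2 * (j : ℝ) + 1) *
              (α + 2 * j + 1) * (α + j + i + 1)) /
          ((α + j + i + 1) *
            (M + Real.Gamma (α + j + 1) ^ 2 * (2 : ℝ) ^ (α + β + 2 * (j : ℝ) + 1) *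
              (α + 2 * j + 1))))
    (K : Set ℂ) (hK : IsCompact K) :
    TendstoUniformlyOn
      (fun (n : ℕ) (z : ℂ) =>
        Polynomial.aeval (1 - z ^ 2 / (2 * (n : ℂ) ^ 2)) (sobQ α β j Ms n) /
          (((n : ℝ) ^ α : ℝ) : ℂ))
      (fun z => ∑ i ∈ Finset.range (j + 2),
        ((b i : ℝ) : ℂ) * 2 ^ i * (z / 2) ^ (2 * i) * besselG (α + 2 * i) z)
      Filter.atTop K := by
  subst hγ
  have hj0 : (0 : ℝ) ≤ j := by positivity
  have hD := jD_pos α β hα j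
  have hb' : ∀ i, i ≤ j + 1 →
      (∑ k ∈ Finset.range (i + 1),
          b k * (Nat.choose i k : ℝ) * (-1) ^ k * (Nat.factorial k : ℝ) * 2 ^ k *
            Real.Gamma (α + i + 1) / Real.Gamma (α + i + k + 1)) = jth α β j M i := by
    intro i hi
    rw [hb i hi]
    have hi0 : (0 : ℝ) ≤ i := by positivity
    change (M * ((i : ℝ) - j) + jD α β j * (α + j + i + 1)) / ((α + j + i + 1) * (M + jD α β j)) = _
    rw [jth]
    have d1 : α + j + i + 1 ≠ 0 := by linarith
    have d2 : M + jD α β j ≠ 0 := by positivity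
    field_simp
    ring
  obtain ⟨C, hC⟩ := jq_bound α β hα hβ j M hM Ms hlim
  have h := unif_lemma (jq α β j Ms) (fun m => jth α β j M m * jU α m) C (2 + |α| + |β|) (by positivity)
    (jq_tendsto α β hα hβ j M hM Ms hlim) hC K hK
  have h' := h.congr_right (g := fun z => ∑ i ∈ Finset.range (j + 2),
        ((b i : ℝ) : ℂ) * 2 ^ i * (z / 2) ^ (2 * i) * besselG (α + 2 * i) z)
    (fun z _ => (limit_hasSum α β hα j M hM b hb' z).tsum_eq)
  refine h'.congr ?_
  filter_upwards [eventually_ge_atTop 1] with n hn z _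
  exact (aeval_sobQ α β hα hβ j Ms hn z).symm
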